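/- Let N ≥ 3, let V satisfy condition (V) and the decay condition that there exist A, α > 0 with V⁺(x) ≤ A|x|^{-2-α} for all x ∈ ℝ^N, let f satisfy conditions (f1), (f2), (f3), let λ > 0, and let u be a solution of problem (P_λ). Then ∫_{ℝ^N} |∇u|² dx ≥ Λ ∫_{ℝ^N} V(x)u² dx. -/

import Mathlib

open MeasureTheory Filter Metric Set
open scoped ENNReal NNReal Topology

noncomputable section

/-- Euclidean space `ℝ^N`. -/
abbrev Euc (N : ℕ) := EuclideanSpace ℝ (Fin N)

/-- The Laplace operator on `ℝ^N`: the sum of the second partial derivatives. -/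
def lap (N : ℕ) (u : Euc N → ℝ) (x : Euc N) : ℝ :=
  ∑ i : Fin N,
    fderiv ℝ (fun y => fderiv ℝ u y (EuclideanSpace.single i 1)) x (EuclideanSpace.single i 1)

/-- The principal eigenvalue `λ₁(R)`: the infimum of `∫_{B_R} |∇u|²` over smooth functions
compactly supported in the open ball `B_R` with `∫_{B_R} V u² = 1`. -/
def lam1 (N : ℕ) (V : Euc N → ℝ) (R : ℝ) : ℝ :=
  sInf { t : ℝ | ∃ u : Euc N → ℝ, ContDiff ℝ (⊤ : ℕ∞) u ∧ HasCompactSupport u ∧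
    tsupport u ⊆ ball (0 : Euc N) R ∧
    (∫ x, V x * u x ^ 2) = 1 ∧ t = ∫ x, ‖gradient u x‖ ^ 2 }

/-- `Λ := lim_{R → ∞} λ₁(R)`. -/
def Lam (N : ℕ) (V : Euc N → ℝ) : ℝ := limUnder atTop (lam1 N V)

/-- Condition (V): `V` is a bounded Hölder-continuous function whose positive part
`V⁺ = max(V, 0)` is nontrivial and decomposes as `V₁ + V₂` with `V₁ ∈ L^{N/2}` and
`|x|² V₂(x) → 0` as `|x| → ∞`. -/
def CondV (N : ℕ) (V V₁ V₂ : Euc N → ℝ) : Prop :=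
  (∃ C β : ℝ≥0, 0 < β ∧ β ≤ 1 ∧ HolderWith C β V) ∧
  (∃ C : ℝ, ∀ x, |V x| ≤ C) ∧
  (∃ x, 0 < V x) ∧
  (∀ x, max (V x) 0 = V₁ x + V₂ x) ∧
  MemLp V₁ ((N : ℝ≥0∞) / 2) volume ∧
  Tendsto (fun x : Euc N => ‖x‖ ^ 2 * V₂ x) (cocompact _) (𝓝 0)

/-- The decay condition: `V⁺(x) ≤ A |x|^{-2-α}`. -/
def CondVDecay (N : ℕ) (V : Euc N → ℝ) : Prop :=
  ∃ A α : ℝ, 0 < A ∧ 0 < α ∧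
    ∀ x : Euc N, x ≠ 0 → max (V x) 0 ≤ A * ‖x‖ ^ (-2 - α)

/-- Conditions (f1), (f2), (f3) on the absorption term `f`. -/
def CondF (N : ℕ) (V : Euc N → ℝ) (f : ℝ → ℝ) : Prop :=
  ContDiff ℝ 1 f ∧ (∀ u : ℝ, 0 ≤ u → 0 ≤ f u) ∧
  -- (f1)
  f 0 = 0 ∧ deriv f 0 = 0 ∧
  0 < Filter.liminf (fun u : ℝ => ((deriv f u / u : ℝ) : EReal)) (𝓝[>] (0 : ℝ)) ∧
  -- (f2)
  StrictMonoOn (fun u : ℝ => f u / u) (Ioi 0) ∧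
  -- (f3)
  (∃ L : EReal, Tendsto (fun u : ℝ => ((f u / u : ℝ) : EReal)) atTop (𝓝 L) ∧
    ((⨆ x, |V x| : ℝ) : EReal) < L)

/-- A solution of problem `(P_λ)`: a positive `C²` function solving the logistic equation
and decaying to zero at infinity. -/
structure IsSolution (N : ℕ) (V : Euc N → ℝ) (f : ℝ → ℝ) (lam : ℝ) (u : Euc N → ℝ) : Prop where
  smooth : ContDiff ℝ 2 u
  pos : ∀ x, 0 < u x
  eqn : ∀ x, -lap N u x = lam * (V x * u x - f (u x))
  decay : Tendsto u (cocompact (Euc N)) (𝓝 0)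

/-- The surface integral `∫_{∂B_R} g dσ` over the sphere of radius `R`, written in polar
coordinates with respect to the canonical surface measure on the unit sphere. -/
def sphereInt (N : ℕ) (g : Euc N → ℝ) (R : ℝ) : ℝ :=
  ∫ ω : sphere (0 : Euc N) 1, g (R • (ω : Euc N)) * R ^ (N - 1)
    ∂((volume : Measure (Euc N)).toSphere)

/-!
Since `f ≥ 0`, a solution satisfies `-Δ u ≤ λ V u`. Comparison with multiples of `‖x‖ ^ (-p)`
bootstraps the decay `V⁺ = O(‖x‖ ^ (-2 - α))` into `u = O(‖x‖ ^ (-p))` for every `p < N - 2`, so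
that `V⁺ u²` is integrable. Now test the inequality with `C¹` truncations of `u` near the value
`0`, which have compact support because `u` vanishes at infinity: Fatou's lemma gives the
integrability of `|∇ u|²` and of `V u²`. The same truncations, after mollification and
normalization, are admissible in the definition of `λ₁(R)` for large `R`, and removing the
truncation by dominated convergence yields the energy inequality.
-/

open Asymptotics ContinuousLinearMap InnerProductSpace Module
open scoped Convolution Gradient Laplacian

section Laplacian

variable {E : Type*} [NormedAddCommGroup E] [InnerProductSpace ℝ E]

lemma hasFDerivAt_norm_rpow_of_ne_zero {x : E} (hx : x ≠ 0) (s : ℝ) :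
    HasFDerivAt (fun y : E => ‖y‖ ^ s) ((s * ‖x‖ ^ (s - 2)) • innerSL ℝ x) x := by
  apply HasStrictFDerivAt.hasFDerivAt
  convert! (hasStrictFDerivAt_norm_sq x).rpow_const (p := s / 2) (by simp [hx]) using 0
  simp_rw [← Real.rpow_natCast_mul (norm_nonneg _), ← Nat.cast_smul_eq_nsmul ℝ, smul_smul]
  ring_nf

lemma contDiffAt_norm_rpow {x : E} (hx : x ≠ 0) (s : ℝ) {n : WithTop ℕ∞} :
    ContDiffAt ℝ n (fun y : E => ‖y‖ ^ s) x :=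
  (contDiffAt_norm ℝ hx).rpow_const_of_ne (norm_ne_zero_iff.2 hx)

lemma fderiv_fderiv_apply_const {F : Type*} [NormedAddCommGroup F] [NormedSpace ℝ F] {f : F → ℝ}
    {x : F} (hf : DifferentiableAt ℝ (fderiv ℝ f) x) (v w : F) :
    fderiv ℝ (fun y => fderiv ℝ f y v) x w = fderiv ℝ (fderiv ℝ f) x w v := by
  simp [fderiv_clm_apply hf (differentiableAt_const v)]

variable [FiniteDimensional ℝ E]

lemma laplacian_eq_sum_fderiv_fderiv {ι : Type*} [Fintype ι] (b : OrthonormalBasis ι ℝ E)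
    (f : E → ℝ) (x : E) : Δ f x = ∑ i, fderiv ℝ (fderiv ℝ f) x (b i) (b i) := by
  simp [laplacian_eq_iteratedFDeriv_orthonormalBasis f b, iteratedFDeriv_two_apply]

lemma continuous_laplacian {f : E → ℝ} (hf : ContDiff ℝ 2 f) : Continuous (Δ f) := by
  have hdd : Continuous (fderiv ℝ (fderiv ℝ f)) :=
    (hf.fderiv_right (m := 1) (by norm_num)).continuous_fderiv one_ne_zero
  rw [funext (laplacian_eq_sum_fderiv_fderiv (stdOrthonormalBasis ℝ E) f)]
  exact continuous_finsetSum _ fun i _ =>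
    (hdd.clm_apply continuous_const).clm_apply continuous_const

lemma lap_eq_laplacian {N : ℕ} {u : Euc N → ℝ} {x : Euc N} (hu : ContDiffAt ℝ 2 u x) :
    lap N u x = Δ u x := by
  have hdiff : DifferentiableAt ℝ (fderiv ℝ u) x :=
    (hu.fderiv_right (m := 1) (by norm_num)).differentiableAt (by norm_num)
  rw [lap, laplacian_eq_sum_fderiv_fderiv (EuclideanSpace.basisFun (Fin N) ℝ)]
  refine Finset.sum_congr rfl fun i _ => ?_
  rw [EuclideanSpace.basisFun_apply, fderiv_fderiv_apply_const hdiff]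

lemma deriv_deriv_nonneg_of_isLocalMin {g : ℝ → ℝ} {t : ℝ} (hmin : IsLocalMin g t)
    (hg : ContinuousAt g t) : 0 ≤ deriv (deriv g) t := by
  by_contra! hneg
  have hmax : IsLocalMax g t := isLocalMax_of_deriv_deriv_neg hneg hmin.deriv_eq_zero hg
  have hconst : g =ᶠ[𝓝 t] fun _ => g t := by
    filter_upwards [hmin, hmax] with s h₁ h₂ using le_antisymm h₂ h₁
  have hzero : deriv (deriv g) t = 0 := by
    rw [hconst.deriv.deriv_eq]
    simp
  exact hneg.ne hzero

lemma fderiv_fderiv_apply_apply_nonneg_of_isLocalMin {F : Type*} [NormedAddCommGroup F]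
    [NormedSpace ℝ F] {f : F → ℝ} {x : F} (hf : ContDiffAt ℝ 2 f x) (hmin : IsLocalMin f x)
    (v : F) : 0 ≤ fderiv ℝ (fderiv ℝ f) x v v := by
  let γ : ℝ → F := fun t => x + t • v
  have hγ₀ : γ 0 = x := by simp [γ]
  have hγ : ∀ t, HasDerivAt γ v t := fun t => by
    simpa [γ] using ((hasDerivAt_id t).smul_const v).const_add x
  have hγ_tendsto : Tendsto γ (𝓝 0) (𝓝 x) := hγ₀ ▸ (hγ 0).continuousAt.tendsto
  have hdiff : DifferentiableAt ℝ (fderiv ℝ f) (γ 0) := by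
    rw [hγ₀]
    exact (hf.fderiv_right (m := 1) (by norm_num)).differentiableAt (by norm_num)
  have hderiv : deriv (f ∘ γ) =ᶠ[𝓝 0] fun t => fderiv ℝ f (γ t) v := by
    filter_upwards [hγ_tendsto.eventually (hf.eventually (by simp))] with t ht
    exact ((ht.differentiableAt (by norm_num)).hasFDerivAt.comp_hasDerivAt t (hγ t)).deriv
  have hderiv₂ : deriv (deriv (f ∘ γ)) 0 = fderiv ℝ (fderiv ℝ f) x v v := by
    rw [hderiv.deriv_eq]
    simpa [hγ₀] using
      ((hdiff.hasFDerivAt.comp_hasDerivAt 0 (hγ 0)).clm_apply (hasDerivAt_const 0 v)).deriv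
  rw [← hderiv₂]
  refine deriv_deriv_nonneg_of_isLocalMin ?_ ?_
  · filter_upwards [hγ_tendsto.eventually hmin] with t ht
    simpa [hγ₀] using ht
  · exact ContinuousAt.comp (by simpa [hγ₀] using hf.continuousAt) (hγ 0).continuousAt

lemma laplacian_nonneg_of_isLocalMin {f : E → ℝ} {x : E} (hf : ContDiffAt ℝ 2 f x)
    (hmin : IsLocalMin f x) : 0 ≤ Δ f x := by
  rw [laplacian_eq_sum_fderiv_fderiv (stdOrthonormalBasis ℝ E)]
  exact Finset.sum_nonneg fun i _ => fderiv_fderiv_apply_apply_nonneg_of_isLocalMin hf hmin _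

lemma nonneg_of_laplacian_neg_of_tendsto_zero {f : E → ℝ} {U : Set E} (hU : IsOpen U)
    (hf : ContinuousOn f (closure U)) (hf₂ : ∀ x ∈ U, ContDiffAt ℝ 2 f x)
    (hlap : ∀ x ∈ U, Δ f x < 0) (hfr : ∀ x ∈ frontier U, 0 ≤ f x)
    (hlim : Tendsto f (cocompact E) (𝓝 0)) {x : E} (hx : x ∈ closure U) : 0 ≤ f x := by
  by_contra! hneg
  have hfar : ∀ᶠ y in cocompact E ⊓ 𝓟 (closure U), f x ≤ f y :=
    ((hlim.eventually_const_lt hneg).mono fun _ => le_of_lt).filter_mono inf_le_left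
  obtain ⟨y, hy, hmin⟩ := hf.exists_isMinOn' isClosed_closure hx hfar
  have hyU : y ∈ U := by
    by_contra hyU
    have hy_fr : y ∈ frontier U := ⟨hy, by rwa [hU.interior_eq]⟩
    exact ((hfr y hy_fr).trans (hmin hx)).not_gt hneg
  have hmin_loc : IsLocalMin f y :=
    hmin.isLocalMin (mem_of_superset (hU.mem_nhds hyU) subset_closure)
  exact (laplacian_nonneg_of_isLocalMin (hf₂ y hyU) hmin_loc).not_gt (hlap y hyU)

lemma laplacian_norm_rpow {x : E} (hx : x ≠ 0) (s : ℝ) :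
    Δ (fun y : E => ‖y‖ ^ s) x = s * (s + finrank ℝ E - 2) * ‖x‖ ^ (s - 2) := by
  have hfderiv : fderiv ℝ (fun y : E => ‖y‖ ^ s)
      =ᶠ[𝓝 x] fun y => (s * ‖y‖ ^ (s - 2)) • innerSL ℝ y := by
    filter_upwards [isOpen_ne.mem_nhds hx] with y hy
    exact (hasFDerivAt_norm_rpow_of_ne_zero hy s).fderiv
  have hfderiv₂ : ∀ v, fderiv ℝ (fderiv ℝ fun y : E => ‖y‖ ^ s) x v v
      = s * ‖x‖ ^ (s - 2) * ‖v‖ ^ 2 + s * (s - 2) * ‖x‖ ^ (s - 4) * inner ℝ v x ^ 2 := by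
    intro v
    have h := ((hasFDerivAt_norm_rpow_of_ne_zero hx (s - 2)).const_mul s).fun_smul
      (innerSL ℝ (E := E)).hasFDerivAt
    rw [hfderiv.fderiv_eq, h.fderiv]
    change s * ‖x‖ ^ (s - 2) * inner ℝ v v
      + s * ((s - 2) * ‖x‖ ^ (s - 2 - 2) * inner ℝ x v) * inner ℝ x v = _
    rw [real_inner_self_eq_norm_sq, real_inner_comm x v]
    ring_nf
  let b := stdOrthonormalBasis ℝ E
  rw [laplacian_eq_sum_fderiv_fderiv b]
  simp_rw [hfderiv₂, b.norm_eq_one]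
  have hpow : ‖x‖ ^ (s - 4) * ‖x‖ ^ 2 = ‖x‖ ^ (s - 2) := by
    rw [← Real.rpow_natCast, ← Real.rpow_add (norm_pos_iff.2 hx)]
    norm_num
    ring_nf
  rw [Finset.sum_add_distrib, ← Finset.mul_sum, ← Finset.mul_sum, b.sum_sq_inner_right,
    mul_assoc _ (‖x‖ ^ (s - 4)), hpow]
  simp only [one_pow, Finset.sum_const, Finset.card_univ, Fintype.card_fin, nsmul_eq_mul]
  ring

end Laplacian

section NormRPow

variable {E : Type*} [SeminormedAddCommGroup E] [ProperSpace E]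

lemma tendsto_norm_rpow_neg_cocompact {p : ℝ} (hp : 0 < p) :
    Tendsto (fun x : E => ‖x‖ ^ (-p)) (cocompact E) (𝓝 0) :=
  (tendsto_rpow_neg_atTop hp).comp tendsto_norm_cocompact_atTop

lemma isBigO_norm_rpow_cocompact_of_le {a b : ℝ} (hab : a ≤ b) :
    (fun x : E => ‖x‖ ^ a) =O[cocompact E] fun x => ‖x‖ ^ b := by
  refine IsBigO.of_norm_eventuallyLE ?_
  filter_upwards [tendsto_norm_cocompact_atTop.eventually_ge_atTop 1] with x hx
  rw [Real.norm_of_nonneg (by positivity)]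
  exact Real.rpow_le_rpow_of_exponent_le hx hab

lemma isBigO_norm_rpow_neg_one_add_norm_rpow_neg {r : ℝ} (hr : 0 ≤ r) :
    (fun x : E => ‖x‖ ^ (-r)) =O[cocompact E] fun x => (1 + ‖x‖) ^ (-r) := by
  refine IsBigO.of_bound (2 ^ r) ?_
  filter_upwards [tendsto_norm_cocompact_atTop.eventually_ge_atTop 1] with x hx
  have hx₀ : 0 < ‖x‖ := one_pos.trans_le hx
  rw [Real.norm_of_nonneg (by positivity), Real.norm_of_nonneg (by positivity)]
  calc ‖x‖ ^ (-r) = 2 ^ r * (2 * ‖x‖) ^ (-r) := by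
        rw [Real.mul_rpow (by norm_num) hx₀.le, ← mul_assoc, ← Real.rpow_add (by norm_num)]
        simp
    _ ≤ 2 ^ r * (1 + ‖x‖) ^ (-r) :=
        mul_le_mul_of_nonneg_left (Real.rpow_le_rpow_of_nonpos (by positivity) (by linarith)
          (neg_nonpos.2 hr)) (by positivity)

end NormRPow

section Decay

variable {E : Type*} [NormedAddCommGroup E] [InnerProductSpace ℝ E] [FiniteDimensional ℝ E]
  {p : ℝ}

lemma laplacian_const_mul_norm_rpow_sub {u : E → ℝ} {x : E} (hx : x ≠ 0)
    (hu : ContDiffAt ℝ 2 u x) (K s : ℝ) :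
    Δ (fun y => K * ‖y‖ ^ s - u y) x
      = K * (s * (s + finrank ℝ E - 2) * ‖x‖ ^ (s - 2)) - Δ u x := by
  have hpow : ContDiffAt ℝ 2 (fun y : E => ‖y‖ ^ s) x := contDiffAt_norm_rpow hx s
  rw [← laplacian_norm_rpow hx, ← smul_eq_mul, ← laplacian_smul K hpow]
  exact (hpow.const_smul K).laplacian_sub hu

/- The barrier `b = ‖x‖ ^ (-p)` satisfies `-Δ b = p (n - 2 - p) ‖x‖ ^ (-p - 2)`. -/
lemma le_mul_norm_rpow_of_neg_laplacian_lt {u : E → ℝ} {K R : ℝ} (hp : 0 < p) (hR : 0 < R)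
    (hu : ContDiff ℝ 2 u) (hlim : Tendsto u (cocompact E) (𝓝 0))
    (hlap : ∀ x, R < ‖x‖ → -Δ u x < K * (p * (finrank ℝ E - 2 - p)) * ‖x‖ ^ (-p - 2))
    (hsphere : ∀ x, ‖x‖ = R → u x ≤ K * ‖x‖ ^ (-p)) {x : E} (hx : R ≤ ‖x‖) :
    u x ≤ K * ‖x‖ ^ (-p) := by
  have hne : ∀ y : E, R ≤ ‖y‖ → y ≠ 0 := fun y hy => norm_pos_iff.1 (hR.trans_le hy)
  have hclosure : ∀ y, y ∈ closure (closedBall (0 : E) R)ᶜ ↔ R ≤ ‖y‖ := fun y => by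
    simp [closure_compl, interior_closedBall _ hR.ne']
  have hsmooth : ∀ y : E, R ≤ ‖y‖ → ContDiffAt ℝ 2 (fun z => K * ‖z‖ ^ (-p) - u z) y :=
    fun y hy => ((contDiffAt_norm_rpow (hne y hy) _).const_smul K).sub hu.contDiffAt
  refine sub_nonneg.1 (nonneg_of_laplacian_neg_of_tendsto_zero
    (f := fun y => K * ‖y‖ ^ (-p) - u y) isClosed_closedBall.isOpen_compl ?_ ?_ ?_ ?_ ?_
    ((hclosure x).2 hx))
  · exact fun y hy => (hsmooth y ((hclosure y).1 hy)).continuousAt.continuousWithinAt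
  · exact fun y hy => hsmooth y ((hclosure y).1 (subset_closure hy))
  · intro y hy
    have hy : R < ‖y‖ := by simpa using hy
    rw [laplacian_const_mul_norm_rpow_sub (hne y hy.le) hu.contDiffAt]
    linarith [hlap y hy]
  · intro y hy
    have hy : ‖y‖ = R := by simpa [frontier_closedBall _ hR.ne'] using hy
    exact sub_nonneg.2 (hsphere y hy)
  · simpa using ((tendsto_norm_rpow_neg_cocompact hp).const_mul K).sub hlim

lemma exists_eventually_le_mul_norm_rpow_of_neg_laplacian_le {u : E → ℝ} {C : ℝ} (hp : 0 < p)
    (hpE : p < finrank ℝ E - 2) (hu : ContDiff ℝ 2 u) (hlim : Tendsto u (cocompact E) (𝓝 0))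
    (hlap : ∀ᶠ x in cocompact E, -Δ u x ≤ C * ‖x‖ ^ (-p - 2)) :
    ∃ K, ∀ᶠ x in cocompact E, u x ≤ K * ‖x‖ ^ (-p) := by
  rw [← cobounded_eq_cocompact] at hlap
  obtain ⟨R₀, -, hR₀⟩ := hasBasis_cobounded_norm.eventually_iff.1 hlap
  obtain ⟨R, hR₀R, hR⟩ : ∃ R, R₀ ≤ R ∧ 0 < R := ⟨max R₀ 1, le_max_left _ _, by positivity⟩
  obtain ⟨M, hM⟩ := (isCompact_closedBall (0 : E) R).bddAbove_image hu.continuous.continuousOn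
  have hc : 0 < p * (finrank ℝ E - 2 - p) := mul_pos hp (by linarith)
  obtain ⟨K, hKC, hKM⟩ : ∃ K, C < K * (p * (finrank ℝ E - 2 - p)) ∧ M ≤ K * R ^ (-p) :=
    (((tendsto_id.atTop_mul_const hc).eventually_gt_atTop C).and
      ((tendsto_id.atTop_mul_const (Real.rpow_pos_of_pos hR (-p))).eventually_ge_atTop M)).exists
  refine ⟨K, ?_⟩
  filter_upwards [tendsto_norm_cocompact_atTop.eventually_ge_atTop R] with x hx
  refine le_mul_norm_rpow_of_neg_laplacian_lt hp hR hu hlim (fun y hy => ?_) (fun y hy => ?_) hx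
  · calc -Δ u y ≤ C * ‖y‖ ^ (-p - 2) := hR₀ (hR₀R.trans hy.le)
      _ < K * (p * (finrank ℝ E - 2 - p)) * ‖y‖ ^ (-p - 2) :=
        mul_lt_mul_of_pos_right hKC (Real.rpow_pos_of_pos (hR.trans hy) _)
  · rw [hy]
    exact (hM ⟨y, by simp [hy], rfl⟩).trans hKM

/-- A nonnegative `C²` function that vanishes at infinity and satisfies `-Δ u ≤ W u`. Solutions of
the logistic equation are of this kind, and the energy inequality only depends on this property. -/
structure IsDecayingSubsolution (W u : E → ℝ) : Prop where
  contDiff : ContDiff ℝ 2 u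
  nonneg : ∀ x, 0 ≤ u x
  neg_laplacian_le : ∀ x, -Δ u x ≤ W x * u x
  tendsto_zero : Tendsto u (cocompact E) (𝓝 0)

namespace IsDecayingSubsolution

variable {W u : E → ℝ} {α : ℝ}

lemma isBigO_norm_rpow_of_isBigO_norm_rpow {q : ℝ} (hu : IsDecayingSubsolution W u)
    (hW : (fun x => max (W x) 0) =O[cocompact E] fun x => ‖x‖ ^ (-2 - α)) (hp : 0 < p)
    (hpE : p < finrank ℝ E - 2) (hpq : p ≤ q + α)
    (huq : u =O[cocompact E] fun x => ‖x‖ ^ (-q)) : u =O[cocompact E] fun x => ‖x‖ ^ (-p) := by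
  have hWu : (fun x => max (W x) 0 * u x) =O[cocompact E] fun x => ‖x‖ ^ (-p - 2) := by
    refine ((hW.mul huq).congr' .rfl ?_).trans
      (isBigO_norm_rpow_cocompact_of_le (show -2 - α + -q ≤ -p - 2 by linarith))
    filter_upwards [tendsto_norm_cocompact_atTop.eventually_gt_atTop 0] with x hx
    rw [Real.rpow_add hx]
  obtain ⟨C, hC⟩ := hWu.bound
  have hlap : ∀ᶠ x in cocompact E, -Δ u x ≤ C * ‖x‖ ^ (-p - 2) := by
    filter_upwards [hC] with x hx
    calc -Δ u x ≤ W x * u x := hu.neg_laplacian_le x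
      _ ≤ max (W x) 0 * u x := mul_le_mul_of_nonneg_right (le_max_left _ _) (hu.nonneg x)
      _ ≤ ‖max (W x) 0 * u x‖ := Real.le_norm_self _
      _ ≤ C * ‖‖x‖ ^ (-p - 2)‖ := hx
      _ = C * ‖x‖ ^ (-p - 2) := by rw [Real.norm_of_nonneg (by positivity)]
  obtain ⟨K, hK⟩ := exists_eventually_le_mul_norm_rpow_of_neg_laplacian_le hp hpE hu.contDiff
    hu.tendsto_zero hlap
  refine IsBigO.of_bound K (hK.mono fun x hx => ?_)
  rwa [Real.norm_of_nonneg (hu.nonneg x), Real.norm_of_nonneg (by positivity)]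

-- Each application of the previous lemma improves the decay exponent by `α`.
lemma isBigO_norm_rpow (hu : IsDecayingSubsolution W u) (hα : 0 < α)
    (hW : (fun x => max (W x) 0) =O[cocompact E] fun x => ‖x‖ ^ (-2 - α)) (hp : 0 < p)
    (hpE : p < finrank ℝ E - 2) : u =O[cocompact E] fun x => ‖x‖ ^ (-p) := by
  have hiter : ∀ k : ℕ, u =O[cocompact E] fun x => ‖x‖ ^ (-min (k * α) p) := by
    intro k
    induction k with
    | zero => simpa [hp.le] using hu.tendsto_zero.isBigO_one ℝ
    | succ k ih =>
      refine hu.isBigO_norm_rpow_of_isBigO_norm_rpow hW (by positivity)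
        ((min_le_right _ _).trans_lt hpE) ?_ ih
      rw [← min_add_add_right, Nat.cast_succ, add_one_mul]
      exact min_le_min_left _ (by linarith)
  obtain ⟨k, hk⟩ := exists_nat_gt (p / α)
  simpa [min_eq_right ((div_lt_iff₀ hα).1 hk).le] using hiter k

variable [MeasurableSpace E] [BorelSpace E] {μ : Measure E} [μ.IsAddHaarMeasure]

-- The exponent `(n - 2) / 2` gives `W⁺ u² = O(‖x‖ ^ (-n - α))`.
lemma integrable_max_zero_mul_sq (hu : IsDecayingSubsolution W u) (hα : 0 < α)
    (hWα : (fun x => max (W x) 0) =O[cocompact E] fun x => ‖x‖ ^ (-2 - α)) (hW : Continuous W)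
    (hE : 2 < finrank ℝ E) : Integrable (fun x => max (W x) 0 * u x ^ 2) μ := by
  have hE' : (2 : ℝ) < finrank ℝ E := mod_cast hE
  have hdecay := hu.isBigO_norm_rpow hα hWα (p := (finrank ℝ E - 2) / 2)
    (by linarith) (by linarith)
  have hbound : (fun x => max (W x) 0 * u x ^ 2)
      =O[cocompact E] fun x => ‖x‖ ^ (-(finrank ℝ E + α)) := by
    refine (hWα.mul (hdecay.pow 2)).congr' .rfl ?_
    filter_upwards [tendsto_norm_cocompact_atTop.eventually_gt_atTop 0] with x hx
    rw [← Real.rpow_mul_natCast hx.le, ← Real.rpow_add hx]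
    ring_nf
  have hloc : LocallyIntegrable (fun x => max (W x) 0 * u x ^ 2) μ :=
    ((hW.max continuous_const).mul (hu.contDiff.continuous.pow 2)).locallyIntegrable
  exact hloc.integrable_of_isBigO_cocompact
    (hbound.trans (isBigO_norm_rpow_neg_one_add_norm_rpow_neg (by positivity)))
    ((integrable_one_add_norm (by linarith)).integrableAtFilter _)

end IsDecayingSubsolution

end Decay

lemma integrable_of_tendsto_of_integral_norm_le {X ι F : Type*} [MeasurableSpace X]
    [NormedAddCommGroup F] {μ : Measure X} {l : Filter ι} [l.NeBot] [l.IsCountablyGenerated]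
    {f : ι → X → F} {g : X → F} {C : ℝ} (hf : ∀ᶠ i in l, Integrable (f i) μ)
    (hC : ∀ᶠ i in l, ∫ x, ‖f i x‖ ∂μ ≤ C)
    (hlim : ∀ᵐ x ∂μ, Tendsto (fun i => f i x) l (𝓝 (g x))) : Integrable g μ := by
  obtain ⟨s, hs, hsC⟩ := exists_seq_forall_of_frequently (hf.and hC).frequently
  have hlim' : ∀ᵐ x ∂μ, Tendsto (fun k => f (s k) x) atTop (𝓝 (g x)) :=
    hlim.mono fun x hx => hx.comp hs
  have hmeas : ∀ k, AEStronglyMeasurable (f (s k)) μ := fun k => (hsC k).1.aestronglyMeasurable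
  have hbound : ∀ k, eLpNorm (f (s k)) 1 μ ≤ ENNReal.ofReal C := fun k => by
    rw [eLpNorm_one_eq_lintegral_enorm, ← ofReal_integral_norm_eq_lintegral_enorm (hsC k).1]
    exact ENNReal.ofReal_le_ofReal (hsC k).2
  refine memLp_one_iff_integrable.1 ⟨aestronglyMeasurable_of_tendsto_ae atTop hmeas hlim', ?_⟩
  calc eLpNorm g 1 μ ≤ liminf (fun k => eLpNorm (f (s k)) 1 μ) atTop :=
        Lp.eLpNorm_lim_le_liminf_eLpNorm hmeas g hlim'
    _ ≤ ENNReal.ofReal C := liminf_le_of_frequently_le' (Frequently.of_forall hbound)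
    _ < ∞ := ENNReal.ofReal_lt_top

section Truncation

variable {ε t : ℝ}

/-- A continuous approximation of the indicator function of `(0, ∞)` as `ε → 0⁺`, vanishing on
`(-∞, ε]` and equal to `1` on `[2 ε, ∞)`. -/
def truncSlope (ε t : ℝ) : ℝ := Real.smoothTransition (t / ε - 1)

/-- The antiderivative of `truncSlope ε`: a `C¹` approximation of `max t 0` as `ε → 0⁺` that
vanishes near `0`, so that it turns a function vanishing at infinity into one with compact
support. -/
def trunc (ε t : ℝ) : ℝ := ∫ s in 0..t, truncSlope ε s

lemma continuous_truncSlope (ε : ℝ) : Continuous (truncSlope ε) :=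
  Real.smoothTransition.continuous.comp (by fun_prop)

lemma truncSlope_nonneg (ε t : ℝ) : 0 ≤ truncSlope ε t := Real.smoothTransition.nonneg _

lemma truncSlope_le_one (ε t : ℝ) : truncSlope ε t ≤ 1 := Real.smoothTransition.le_one _

lemma truncSlope_eq_zero (hε : 0 < ε) (ht : t ≤ ε) : truncSlope ε t = 0 :=
  Real.smoothTransition.zero_of_nonpos (sub_nonpos.2 ((div_le_one hε).2 ht))

lemma tendsto_truncSlope (ht : 0 < t) :
    Tendsto (fun ε => truncSlope ε t) (𝓝[>] 0) (𝓝 1) := by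
  refine tendsto_const_nhds.congr' ?_
  filter_upwards [Ioc_mem_nhdsGT (half_pos ht)] with ε hε
  refine (Real.smoothTransition.one_of_one_le ?_).symm
  rw [le_sub_iff_add_le, le_div_iff₀ hε.1]
  linarith [hε.2]

lemma hasDerivAt_trunc (ε t : ℝ) : HasDerivAt (trunc ε) (truncSlope ε t) t :=
  (continuous_truncSlope ε).integral_hasStrictDerivAt 0 t |>.hasDerivAt

lemma contDiff_trunc (ε : ℝ) : ContDiff ℝ 1 (trunc ε) := by
  refine contDiff_one_iff_deriv.2 ⟨fun t => (hasDerivAt_trunc ε t).differentiableAt, ?_⟩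
  rw [funext fun t => (hasDerivAt_trunc ε t).deriv]
  exact continuous_truncSlope ε

lemma trunc_nonneg (ht : 0 ≤ t) : 0 ≤ trunc ε t :=
  intervalIntegral.integral_nonneg ht fun s _ => truncSlope_nonneg ε s

lemma trunc_le_self (ht : 0 ≤ t) : trunc ε t ≤ t := by
  simpa [trunc] using intervalIntegral.integral_mono_on (μ := volume) ht
    ((continuous_truncSlope ε).intervalIntegrable 0 t) (intervalIntegrable_const (c := (1 : ℝ)))
    fun s _ => truncSlope_le_one ε s

lemma trunc_eventuallyEq_zero (hε : 0 < ε) : trunc ε =ᶠ[𝓝 0] 0 := by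
  filter_upwards [Iio_mem_nhds hε] with t ht
  refine (intervalIntegral.integral_congr (g := fun _ => (0 : ℝ)) fun s hs => ?_).trans (by simp)
  exact truncSlope_eq_zero hε (hs.2.trans (max_le hε.le ht.le))

lemma truncSlope_eventuallyEq_zero (hε : 0 < ε) : truncSlope ε =ᶠ[𝓝 0] 0 := by
  filter_upwards [Iio_mem_nhds hε] with t ht using truncSlope_eq_zero hε ht.le

lemma tendsto_trunc (ht : 0 ≤ t) : Tendsto (fun ε => trunc ε t) (𝓝[>] 0) (𝓝 t) := by
  suffices Tendsto (fun ε => trunc ε t) (𝓝[>] 0) (𝓝 (∫ _ in 0..t, (1 : ℝ))) by simpa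
  refine intervalIntegral.tendsto_integral_filter_of_dominated_convergence (fun _ => 1) ?_ ?_
    intervalIntegrable_const ?_
  · exact .of_forall fun ε => (continuous_truncSlope ε).aestronglyMeasurable
  · refine .of_forall fun ε => .of_forall fun s _ => ?_
    rw [Real.norm_of_nonneg (truncSlope_nonneg ε s)]
    exact truncSlope_le_one ε s
  · refine .of_forall fun s hs => tendsto_truncSlope ?_
    rw [uIoc_of_le ht] at hs
    exact hs.1

lemma hasCompactSupport_comp_of_tendsto_zero {X Y Z : Type*} [TopologicalSpace X] [R1Space X]
    [TopologicalSpace Y] [Zero Y] [Zero Z] {u : X → Y} {g : Y → Z}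
    (hu : Tendsto u (cocompact X) (𝓝 0)) (hg : g =ᶠ[𝓝 0] 0) : HasCompactSupport (g ∘ u) := by
  rw [hasCompactSupport_iff_eventuallyEq, coclosedCompact_eq_cocompact]
  exact hu.eventually hg

end Truncation

section Gradient

variable {E : Type*} [NormedAddCommGroup E] [InnerProductSpace ℝ E] [CompleteSpace E]
  {u : E → ℝ}

lemma norm_gradient_eq_norm_fderiv (x : E) : ‖∇ u x‖ = ‖fderiv ℝ u x‖ := by
  rw [gradient, LinearIsometryEquiv.norm_map]

lemma continuous_gradient (hu : ContDiff ℝ 1 u) : Continuous (∇ u) :=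
  (toDual ℝ E).symm.continuous.comp (hu.continuous_fderiv one_ne_zero)

lemma hasGradientAt_comp {g : ℝ → ℝ} {g' : ℝ} {v x : E} (hg : HasDerivAt g g' (u x))
    (hu : HasGradientAt u v x) : HasGradientAt (g ∘ u) (g' • v) x := by
  rw [hasGradientAt_iff_hasFDerivAt, map_smulₛₗ]
  exact hg.comp_hasFDerivAt x hu.hasFDerivAt

end Gradient

section Green

lemma integral_fderiv_apply_mul_eq_neg {F : Type*} [NormedAddCommGroup F] [NormedSpace ℝ F]
    [FiniteDimensional ℝ F] [MeasurableSpace F] [BorelSpace F] {μ : Measure F}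
    [μ.IsAddHaarMeasure] {φ ψ : F → ℝ} (hφ : ContDiff ℝ 1 φ) (hφc : HasCompactSupport φ)
    (hψ : ContDiff ℝ 1 ψ) (v : F) :
    ∫ x, fderiv ℝ φ x v * ψ x ∂μ = -∫ x, φ x * fderiv ℝ ψ x v ∂μ := by
  have hdφ : Continuous fun x => fderiv ℝ φ x v :=
    (hφ.continuous_fderiv one_ne_zero).clm_apply continuous_const
  have hdψ : Continuous fun x => fderiv ℝ ψ x v :=
    (hψ.continuous_fderiv one_ne_zero).clm_apply continuous_const
  rw [eq_comm, neg_eq_iff_eq_neg]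
  exact integral_mul_fderiv_eq_neg_fderiv_mul_of_integrable
    ((hdφ.mul hψ.continuous).integrable_of_hasCompactSupport
      (hφc.fderiv_apply (𝕜 := ℝ) v).mul_right)
    ((hφ.continuous.mul hdψ).integrable_of_hasCompactSupport hφc.mul_right)
    ((hφ.continuous.mul hψ.continuous).integrable_of_hasCompactSupport hφc.mul_right)
    (fun x _ => hφ.differentiable one_ne_zero x) (fun x _ => hψ.differentiable one_ne_zero x)

lemma integral_inner_gradient_eq_neg_integral_mul_laplacian {E : Type*} [NormedAddCommGroup E]
    [InnerProductSpace ℝ E] [FiniteDimensional ℝ E] [MeasurableSpace E] [BorelSpace E]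
    {μ : Measure E} [μ.IsAddHaarMeasure] {φ u : E → ℝ} (hφ : ContDiff ℝ 1 φ)
    (hφc : HasCompactSupport φ) (hu : ContDiff ℝ 2 u) :
    ∫ x, inner ℝ (∇ φ x) (∇ u x) ∂μ = -∫ x, φ x * Δ u x ∂μ := by
  let b := stdOrthonormalBasis ℝ E
  have hdu : ContDiff ℝ 1 (fderiv ℝ u) := hu.fderiv_right (by norm_num)
  have hWu₁ : ∀ v, Integrable (fun x => fderiv ℝ φ x v * fderiv ℝ u x v) μ := fun v =>
    (((hφ.continuous_fderiv one_ne_zero).clm_apply continuous_const).mul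
      (hdu.continuous.clm_apply continuous_const)).integrable_of_hasCompactSupport
        (hφc.fderiv_apply (𝕜 := ℝ) v).mul_right
  have hWu₂ : ∀ v, Integrable (fun x => φ x * fderiv ℝ (fderiv ℝ u) x v v) μ := fun v =>
    (hφ.continuous.mul (((hdu.continuous_fderiv one_ne_zero).clm_apply
      continuous_const).clm_apply continuous_const)).integrable_of_hasCompactSupport hφc.mul_right
  have hparts : ∀ v, ∫ x, fderiv ℝ φ x v * fderiv ℝ u x v ∂μ
      = -∫ x, φ x * fderiv ℝ (fderiv ℝ u) x v v ∂μ := fun v => by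
    simpa only [fderiv_fderiv_apply_const (hdu.differentiable one_ne_zero _)] using
      integral_fderiv_apply_mul_eq_neg hφ hφc (hdu.clm_apply contDiff_const) v
  calc ∫ x, inner ℝ (∇ φ x) (∇ u x) ∂μ
      = ∑ i, ∫ x, fderiv ℝ φ x (b i) * fderiv ℝ u x (b i) ∂μ := by
        rw [← integral_finsetSum _ fun i _ => hWu₁ (b i)]
        congr with x
        rw [← b.sum_inner_mul_inner]
        refine Finset.sum_congr rfl fun i _ => ?_
        rw [inner_gradient_left, real_inner_comm, inner_gradient_left]
    _ = -∫ x, φ x * Δ u x ∂μ := by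
        simp_rw [hparts, laplacian_eq_sum_fderiv_fderiv b, Finset.mul_sum]
        rw [integral_finsetSum _ fun i _ => hWu₂ (b i), Finset.sum_neg_distrib]

end Green

section Energy

variable {E : Type*} [NormedAddCommGroup E] [InnerProductSpace ℝ E] [FiniteDimensional ℝ E]

lemma gradient_trunc_comp {u : E → ℝ} {x : E} (hu : DifferentiableAt ℝ u x) (ε : ℝ) :
    ∇ (trunc ε ∘ u) x = truncSlope ε (u x) • ∇ u x :=
  (hasGradientAt_comp (hasDerivAt_trunc ε (u x)) hu.hasGradientAt).gradient

/-- The energy density that testing `-Δ u ≤ W u` with `trunc ε ∘ u` leaves on the left-hand side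
once the negative part of `W` is moved there. -/
def truncEnergy (W u : E → ℝ) (ε : ℝ) (x : E) : ℝ :=
  truncSlope ε (u x) * ‖∇ u x‖ ^ 2 + max (-W x) 0 * (u x * trunc ε (u x))

namespace IsDecayingSubsolution

variable {W u : E → ℝ}

lemma gradient_eq_zero (hu : IsDecayingSubsolution W u) {x : E} (hx : u x = 0) : ∇ u x = 0 := by
  have hmin : IsLocalMin u x := .of_forall fun y => hx ▸ hu.nonneg y
  rw [gradient, hmin.fderiv_eq_zero, map_zero]

lemma truncEnergy_nonneg (hu : IsDecayingSubsolution W u) (ε : ℝ) (x : E) :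
    0 ≤ truncEnergy W u ε x :=
  add_nonneg (mul_nonneg (truncSlope_nonneg _ _) (sq_nonneg _)) <|
    mul_nonneg (le_max_right _ _) <| mul_nonneg (hu.nonneg x) <| trunc_nonneg <| hu.nonneg x

lemma tendsto_truncEnergy (hu : IsDecayingSubsolution W u) (x : E) :
    Tendsto (fun ε => truncEnergy W u ε x) (𝓝[>] 0)
      (𝓝 (‖∇ u x‖ ^ 2 + max (-W x) 0 * u x ^ 2)) := by
  rw [pow_two (u x)]
  refine .add ?_ (((tendsto_trunc (hu.nonneg x)).const_mul (u x)).const_mul _)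
  rcases (hu.nonneg x).eq_or_lt with hx | hx
  · simp [hu.gradient_eq_zero hx.symm]
  · simpa using (tendsto_truncSlope hx).mul_const (‖∇ u x‖ ^ 2)

lemma hasCompactSupport_trunc_comp (hu : IsDecayingSubsolution W u) {ε : ℝ} (hε : 0 < ε) :
    HasCompactSupport (trunc ε ∘ u) :=
  hasCompactSupport_comp_of_tendsto_zero hu.tendsto_zero (trunc_eventuallyEq_zero hε)

lemma contDiff_trunc_comp (hu : IsDecayingSubsolution W u) (ε : ℝ) : ContDiff ℝ 1 (trunc ε ∘ u) :=
  (contDiff_trunc ε).comp (hu.contDiff.of_le one_le_two)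

variable [MeasurableSpace E] [BorelSpace E] {μ : Measure E} [μ.IsAddHaarMeasure]

lemma integrable_truncSlope_mul_norm_gradient_sq (hu : IsDecayingSubsolution W u) {ε : ℝ}
    (hε : 0 < ε) : Integrable (fun x => truncSlope ε (u x) * ‖∇ u x‖ ^ 2) μ := by
  have hgrad := continuous_gradient (hu.contDiff.of_le one_le_two)
  exact (((continuous_truncSlope ε).comp hu.contDiff.continuous).mul
    (hgrad.norm.pow 2)).integrable_of_hasCompactSupport
      (hasCompactSupport_comp_of_tendsto_zero hu.tendsto_zero
        (truncSlope_eventuallyEq_zero hε)).mul_right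

lemma integrable_mul_trunc_comp (hu : IsDecayingSubsolution W u) {ε : ℝ} (hε : 0 < ε) {g : E → ℝ}
    (hg : Continuous g) : Integrable (fun x => g x * (u x * trunc ε (u x))) μ :=
  (hg.mul (hu.contDiff.continuous.mul
    (hu.contDiff_trunc_comp ε).continuous)).integrable_of_hasCompactSupport
    (hu.hasCompactSupport_trunc_comp hε).mul_left.mul_left

lemma integrable_truncEnergy (hu : IsDecayingSubsolution W u) (hW : Continuous W) {ε : ℝ}
    (hε : 0 < ε) : Integrable (truncEnergy W u ε) μ :=
  (hu.integrable_truncSlope_mul_norm_gradient_sq hε).add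
    (hu.integrable_mul_trunc_comp hε (hW.neg.max continuous_const))

lemma integral_truncSlope_mul_norm_gradient_sq_le (hu : IsDecayingSubsolution W u)
    (hW : Continuous W) {ε : ℝ} (hε : 0 < ε) :
    ∫ x, truncSlope ε (u x) * ‖∇ u x‖ ^ 2 ∂μ ≤ ∫ x, W x * (u x * trunc ε (u x)) ∂μ := by
  have hgreen := integral_inner_gradient_eq_neg_integral_mul_laplacian (μ := μ)
    (hu.contDiff_trunc_comp ε) (hu.hasCompactSupport_trunc_comp hε) hu.contDiff
  calc ∫ x, truncSlope ε (u x) * ‖∇ u x‖ ^ 2 ∂μ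
      = ∫ x, inner ℝ (∇ (trunc ε ∘ u) x) (∇ u x) ∂μ := by
        congr with x
        rw [gradient_trunc_comp (hu.contDiff.differentiable two_ne_zero x), real_inner_smul_left,
          real_inner_self_eq_norm_sq]
    _ = ∫ x, -((trunc ε ∘ u) x * Δ u x) ∂μ := by rw [hgreen, integral_neg]
    _ ≤ ∫ x, W x * (u x * trunc ε (u x)) ∂μ := by
        refine integral_mono ?_ (hu.integrable_mul_trunc_comp hε hW) fun x => ?_
        · exact (((hu.contDiff_trunc_comp ε).continuous.mul
            (continuous_laplacian hu.contDiff)).integrable_of_hasCompactSupport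
              (hu.hasCompactSupport_trunc_comp hε).mul_right).neg
        · have := mul_le_mul_of_nonneg_left (hu.neg_laplacian_le x)
            (trunc_nonneg (ε := ε) (hu.nonneg x))
          simp only [Function.comp_apply]
          linarith

lemma integral_truncEnergy_le (hu : IsDecayingSubsolution W u) (hW : Continuous W)
    (hWu : Integrable (fun x => max (W x) 0 * u x ^ 2) μ) {ε : ℝ} (hε : 0 < ε) :
    ∫ x, truncEnergy W u ε x ∂μ ≤ ∫ x, max (W x) 0 * u x ^ 2 ∂μ := by
  have hneg : Integrable (fun x => max (-W x) 0 * (u x * trunc ε (u x))) μ :=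
    hu.integrable_mul_trunc_comp hε (hW.neg.max continuous_const)
  calc ∫ x, truncEnergy W u ε x ∂μ
      = ∫ x, truncSlope ε (u x) * ‖∇ u x‖ ^ 2 ∂μ
        + ∫ x, max (-W x) 0 * (u x * trunc ε (u x)) ∂μ :=
        integral_add (hu.integrable_truncSlope_mul_norm_gradient_sq hε) hneg
    _ ≤ ∫ x, W x * (u x * trunc ε (u x)) ∂μ
        + ∫ x, max (-W x) 0 * (u x * trunc ε (u x)) ∂μ :=
        add_le_add_left (hu.integral_truncSlope_mul_norm_gradient_sq_le hW hε) _
    _ = ∫ x, max (W x) 0 * (u x * trunc ε (u x)) ∂μ := by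
        rw [← integral_add (hu.integrable_mul_trunc_comp hε hW) hneg]
        congr with x
        rw [← add_mul, add_max, add_zero, add_neg_cancel, max_comm]
    _ ≤ ∫ x, max (W x) 0 * u x ^ 2 ∂μ := by
        refine integral_mono (hu.integrable_mul_trunc_comp hε (hW.max continuous_const)) hWu
          fun x => ?_
        rw [pow_two]
        exact mul_le_mul_of_nonneg_left (mul_le_mul_of_nonneg_left (trunc_le_self (hu.nonneg x))
          (hu.nonneg x)) (le_max_right _ _)

lemma integrable_norm_gradient_sq_add (hu : IsDecayingSubsolution W u) (hW : Continuous W)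
    (hWu : Integrable (fun x => max (W x) 0 * u x ^ 2) μ) :
    Integrable (fun x => ‖∇ u x‖ ^ 2 + max (-W x) 0 * u x ^ 2) μ := by
  refine integrable_of_tendsto_of_integral_norm_le (l := 𝓝[>] (0 : ℝ)) (f := truncEnergy W u)
    (C := ∫ x, max (W x) 0 * u x ^ 2 ∂μ) ?_ ?_ (.of_forall hu.tendsto_truncEnergy)
  · filter_upwards [self_mem_nhdsWithin] with ε hε using hu.integrable_truncEnergy hW hε
  · filter_upwards [self_mem_nhdsWithin] with ε hε
    simpa only [Real.norm_of_nonneg (hu.truncEnergy_nonneg ε _)] using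
      hu.integral_truncEnergy_le hW hWu hε

lemma integrable_norm_gradient_sq (hu : IsDecayingSubsolution W u) (hW : Continuous W)
    (hWu : Integrable (fun x => max (W x) 0 * u x ^ 2) μ) :
    Integrable (fun x => ‖∇ u x‖ ^ 2) μ := by
  have hcont := continuous_gradient (hu.contDiff.of_le one_le_two)
  refine (hu.integrable_norm_gradient_sq_add hW hWu).mono' (by fun_prop) (.of_forall fun x => ?_)
  rw [Real.norm_of_nonneg (sq_nonneg _), le_add_iff_nonneg_right]
  positivity

lemma integrable_mul_sq (hu : IsDecayingSubsolution W u) (hW : Continuous W)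
    (hWu : Integrable (fun x => max (W x) 0 * u x ^ 2) μ) :
    Integrable (fun x => W x * u x ^ 2) μ := by
  refine (hWu.sub ((hu.integrable_norm_gradient_sq_add hW hWu).sub
    (hu.integrable_norm_gradient_sq hW hWu))).congr (.of_forall fun x => ?_)
  simp only [Pi.sub_apply, add_sub_cancel_left, ← sub_mul]
  rw [max_zero_sub_max_neg_zero_eq_self]

end IsDecayingSubsolution

end Energy

section Mollification

variable {E F : Type*} [NormedAddCommGroup E] [NormedSpace ℝ E]
  [NormedAddCommGroup F] [NormedSpace ℝ F]

lemma precompR_lsmul : (lsmul ℝ ℝ : ℝ →L[ℝ] F →L[ℝ] F).precompR E = lsmul ℝ ℝ := by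
  ext
  simp

variable [MeasurableSpace E] [BorelSpace E] {μ : Measure E}

lemma fderiv_lsmul_convolution [SecondCountableTopology E] [SFinite μ] [μ.IsAddLeftInvariant]
    {ρ : E → ℝ} {g : E → F} (hρ : LocallyIntegrable ρ μ) (hg : ContDiff ℝ 1 g)
    (hgc : HasCompactSupport g) (x : E) :
    fderiv ℝ (ρ ⋆[lsmul ℝ ℝ, μ] g) x = (ρ ⋆[lsmul ℝ ℝ, μ] fderiv ℝ g) x := by
  rw [(hgc.hasFDerivAt_convolution_right (lsmul ℝ ℝ) hρ hg x).fderiv, precompR_lsmul]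

variable [FiniteDimensional ℝ E] [HasContDiffBump E] {g : E → F}

lemma normed_convolution_eq_zero [IsLocallyFiniteMeasure μ] [μ.IsOpenPosMeasure]
    (ρ : ContDiffBump (0 : E)) {R : ℝ}
    (hg : ∀ x ∉ closedBall 0 R, g x = 0) {x : E} (hx : x ∉ closedBall 0 (R + ρ.rOut)) :
    (ρ.normed μ ⋆[lsmul ℝ ℝ, μ] g) x = 0 := by
  by_contra hne
  obtain ⟨a, ha, b, hb, rfl⟩ := support_convolution_subset_swap _ (Function.mem_support.2 hne)
  have ha : ‖a‖ ≤ R := by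
    by_contra haR
    exact ha (hg a (by simpa using haR))
  rw [ρ.support_normed_eq, mem_ball_zero_iff] at hb
  refine hx (mem_closedBall_zero_iff.2 ?_)
  linarith [norm_add_le a b]

variable [CompleteSpace F] [μ.IsAddHaarMeasure]

lemma norm_normed_convolution_le (ρ : ContDiffBump (0 : E)) (hg : Continuous g)
    {C : ℝ} (hC : ∀ x, ‖g x‖ ≤ C) (x : E) : ‖(ρ.normed μ ⋆[lsmul ℝ ℝ, μ] g) x‖ ≤ C := by
  rw [← dist_zero_right]
  exact dist_convolution_le ((norm_nonneg _).trans (hC 0)) ρ.support_normed_eq.subset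
    ρ.nonneg_normed ρ.integral_normed hg.aestronglyMeasurable
    fun y _ => (dist_zero_right (g y)).trans_le (hC y)

lemma tendsto_integral_mul_norm_normed_convolution_sq {ι : Type*} {l : Filter ι}
    [l.IsCountablyGenerated] {ρ : ι → ContDiffBump (0 : E)}
    (hρ : Tendsto (fun i => (ρ i).rOut) l (𝓝 0)) {V : E → ℝ} (hV : Continuous V)
    (hg : Continuous g) (hgc : HasCompactSupport g) :
    Tendsto (fun i => ∫ x, V x * ‖((ρ i).normed μ ⋆[lsmul ℝ ℝ, μ] g) x‖ ^ 2 ∂μ) l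
      (𝓝 (∫ x, V x * ‖g x‖ ^ 2 ∂μ)) := by
  obtain ⟨R, hR⟩ := hgc.isCompact.isBounded.subset_closedBall (0 : E)
  obtain ⟨C, hC⟩ := hgc.exists_bound_of_continuous hg
  have hg₀ : ∀ x ∉ closedBall (0 : E) R, g x = 0 := fun x hx =>
    image_eq_zero_of_notMem_tsupport fun h => hx (hR h)
  refine tendsto_integral_filter_of_dominated_convergence
    ((closedBall (0 : E) (R + 1)).indicator fun x => |V x| * C ^ 2) ?_ ?_ ?_ ?_
  · refine .of_forall fun i => (hV.mul (Continuous.pow (.norm ?_) 2)).aestronglyMeasurable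
    exact (ρ i).hasCompactSupport_normed.continuous_convolution_left _ (ρ i).continuous_normed
      hg.locallyIntegrable
  · filter_upwards [hρ.eventually_le_const one_pos] with i hi
    refine .of_forall fun x => ?_
    by_cases hx : x ∈ closedBall (0 : E) (R + 1)
    · rw [indicator_of_mem hx, norm_mul, Real.norm_eq_abs, norm_pow, norm_norm]
      have := norm_normed_convolution_le (μ := μ) (ρ i) hg hC x
      gcongr
    · have hx' : x ∉ closedBall (0 : E) (R + (ρ i).rOut) := fun h =>
        hx (closedBall_subset_closedBall (by linarith) h)
      rw [indicator_of_notMem hx, normed_convolution_eq_zero (ρ i) hg₀ hx']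
      simp
  · rw [integrable_indicator_iff measurableSet_closedBall]
    exact (hV.abs.mul continuous_const).continuousOn.integrableOn_compact
      (isCompact_closedBall _ _)
  · refine .of_forall fun x => ?_
    exact ((ContDiffBump.convolution_tendsto_right_of_continuous hρ hg x).norm.pow 2).const_mul _

lemma exists_seq_contDiffBump_tendsto_rOut {G : Type*} [NormedAddCommGroup G] (c : G) :
    ∃ ρ : ℕ → ContDiffBump c, Tendsto (fun n => (ρ n).rOut) atTop (𝓝 0) :=
  ⟨fun n => ⟨1 / (n + 1) / 2, 1 / (n + 1), by positivity, half_lt_self (by positivity)⟩,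
    tendsto_one_div_add_atTop_nhds_zero_nat⟩

end Mollification

section PrincipalEigenvalue

variable {N : ℕ} (V : Euc N → ℝ)

/-- The set of Dirichlet energies whose infimum is `λ₁(R)`. -/
def admissibleEnergies (R : ℝ) : Set ℝ :=
  {t | ∃ u : Euc N → ℝ, ContDiff ℝ (⊤ : ℕ∞) u ∧ HasCompactSupport u ∧ tsupport u ⊆ ball 0 R ∧
    (∫ x, V x * u x ^ 2) = 1 ∧ t = ∫ x, ‖∇ u x‖ ^ 2}

lemma lam1_eq_sInf (R : ℝ) : lam1 N V R = sInf (admissibleEnergies V R) := rfl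

lemma admissibleEnergies_mono : Monotone (admissibleEnergies V) := by
  rintro R R' hR t ⟨u, hu, huc, hsupp, hV, rfl⟩
  exact ⟨u, hu, huc, hsupp.trans (ball_subset_ball hR), hV, rfl⟩

lemma zero_mem_lowerBounds_admissibleEnergies (R : ℝ) :
    0 ∈ lowerBounds (admissibleEnergies V R) := by
  rintro t ⟨u, -, -, -, -, rfl⟩
  positivity

lemma lam1_nonneg (R : ℝ) : 0 ≤ lam1 N V R :=
  Real.sInf_nonneg (zero_mem_lowerBounds_admissibleEnergies V R)

/- `lam1` is antitone only where there are admissible functions: the infimum of the empty set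
is `0`. -/
lemma tendsto_lam1 : Tendsto (lam1 N V) atTop (𝓝 (Lam N V)) := by
  suffices h : ∃ L, Tendsto (lam1 N V) atTop (𝓝 L) from tendsto_nhds_limUnder h
  by_cases hne : ∃ R, (admissibleEnergies V R).Nonempty
  · obtain ⟨R₀, hR₀⟩ := hne
    have hanti : Antitone fun R => lam1 N V (max R R₀) := fun R R' hR =>
      csInf_le_csInf ⟨0, zero_mem_lowerBounds_admissibleEnergies V _⟩
        (hR₀.mono (admissibleEnergies_mono V (le_max_right _ _)))
        (admissibleEnergies_mono V (max_le_max_right R₀ hR))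
    refine ⟨_, (tendsto_atTop_ciInf hanti ⟨0, ?_⟩).congr' ?_⟩
    · rintro _ ⟨R, rfl⟩
      exact lam1_nonneg V _
    · filter_upwards [eventually_ge_atTop R₀] with R hR
      rw [max_eq_left hR]
  · refine ⟨0, tendsto_const_nhds.congr fun R => ?_⟩
    rw [lam1_eq_sInf, not_nonempty_iff_eq_empty.1 fun h => hne ⟨R, h⟩, Real.sInf_empty]

lemma Lam_nonneg : 0 ≤ Lam N V := ge_of_tendsto' (tendsto_lam1 V) (lam1_nonneg V)

variable {V} {φ u : Euc N → ℝ}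

lemma div_mem_admissibleEnergies {R : ℝ} (hφ : ContDiff ℝ (⊤ : ℕ∞) φ) (hφc : HasCompactSupport φ)
    (hφR : tsupport φ ⊆ ball 0 R) (hV : 0 < ∫ x, V x * φ x ^ 2) :
    (∫ x, ‖∇ φ x‖ ^ 2) / ∫ x, V x * φ x ^ 2 ∈ admissibleEnergies V R := by
  set c := ∫ x, V x * φ x ^ 2 with hc
  have hsupp : Function.support ((√c)⁻¹ • φ) ⊆ Function.support φ :=
    Function.support_const_smul_subset _ _
  have hsq : (√c)⁻¹ ^ 2 = c⁻¹ := by rw [inv_pow, Real.sq_sqrt hV.le]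
  refine ⟨(√c)⁻¹ • φ, contDiff_const.smul hφ, hφc.mono hsupp, (closure_mono hsupp).trans hφR,
    ?_, ?_⟩
  · calc ∫ x, V x * ((√c)⁻¹ • φ) x ^ 2 = ∫ x, c⁻¹ * (V x * φ x ^ 2) := by
          congr with x
          rw [Pi.smul_apply, smul_eq_mul, mul_pow, hsq, mul_left_comm]
      _ = 1 := by rw [integral_const_mul, ← hc, inv_mul_cancel₀ hV.ne']
  · calc (∫ x, ‖∇ φ x‖ ^ 2) / c = ∫ x, c⁻¹ * ‖∇ φ x‖ ^ 2 := by
          rw [integral_const_mul, div_eq_inv_mul]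
      _ = ∫ x, ‖∇ ((√c)⁻¹ • φ) x‖ ^ 2 := by
          congr with x
          rw [norm_gradient_eq_norm_fderiv, norm_gradient_eq_norm_fderiv,
            fderiv_const_smul (hφ.differentiable (by simp) x), norm_smul, mul_pow, norm_inv,
            Real.norm_of_nonneg (Real.sqrt_nonneg c), hsq]

lemma Lam_mul_integral_sq_le_of_contDiff_top (hφ : ContDiff ℝ (⊤ : ℕ∞) φ)
    (hφc : HasCompactSupport φ) : Lam N V * ∫ x, V x * φ x ^ 2 ≤ ∫ x, ‖∇ φ x‖ ^ 2 := by
  rcases le_or_gt (∫ x, V x * φ x ^ 2) 0 with hV | hV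
  · exact (mul_nonpos_of_nonneg_of_nonpos (Lam_nonneg V) hV).trans (by positivity)
  obtain ⟨R₀, hR₀⟩ := hφc.isCompact.isBounded.subset_ball (0 : Euc N)
  rw [← le_div_iff₀ hV]
  refine le_of_tendsto (tendsto_lam1 V) ?_
  filter_upwards [eventually_ge_atTop R₀] with R hR
  exact csInf_le ⟨0, zero_mem_lowerBounds_admissibleEnergies V R⟩
    (div_mem_admissibleEnergies hφ hφc (hR₀.trans (ball_subset_ball hR)) hV)

lemma Lam_mul_integral_sq_le_of_hasCompactSupport (hV : Continuous V) (hφ : ContDiff ℝ 1 φ)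
    (hφc : HasCompactSupport φ) : Lam N V * ∫ x, V x * φ x ^ 2 ≤ ∫ x, ‖∇ φ x‖ ^ 2 := by
  obtain ⟨ρ, hρ⟩ := exists_seq_contDiffBump_tendsto_rOut (0 : Euc N)
  have hleft := tendsto_integral_mul_norm_normed_convolution_sq (μ := volume) hρ hV
    hφ.continuous hφc
  have hright := tendsto_integral_mul_norm_normed_convolution_sq (μ := volume) hρ
    (continuous_const (y := (1 : ℝ))) (hφ.continuous_fderiv one_ne_zero) (hφc.fderiv (𝕜 := ℝ))
  simp only [one_mul, Real.norm_eq_abs, sq_abs] at hleft hright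
  simp only [norm_gradient_eq_norm_fderiv]
  refine le_of_tendsto_of_tendsto' (hleft.const_mul _) hright fun n => ?_
  have hρc : HasCompactSupport ((ρ n).normed volume) := (ρ n).hasCompactSupport_normed
  have hρs : ContDiff ℝ (⊤ : ℕ∞) ((ρ n).normed volume) := (ρ n).contDiff_normed
  simpa only [norm_gradient_eq_norm_fderiv,
    fderiv_lsmul_convolution hρs.continuous.locallyIntegrable hφ hφc] using
    Lam_mul_integral_sq_le_of_contDiff_top (V := V)
      (hρc.contDiff_convolution_left (lsmul ℝ ℝ) hρs
        (hφ.continuous.locallyIntegrable (μ := volume)))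
      (hρc.convolution (lsmul ℝ ℝ) hφc)

lemma Lam_mul_integral_sq_le_of_tendsto_zero (hV : Continuous V) (hu : ContDiff ℝ 1 u)
    (hu₀ : ∀ x, 0 ≤ u x) (hlim : Tendsto u (cocompact (Euc N)) (𝓝 0))
    (hVu : Integrable fun x => V x * u x ^ 2) (hgrad : Integrable fun x => ‖∇ u x‖ ^ 2) :
    Lam N V * ∫ x, V x * u x ^ 2 ≤ ∫ x, ‖∇ u x‖ ^ 2 := by
  have htrunc : ∀ ε, ContDiff ℝ 1 (trunc ε ∘ u) := fun ε => (contDiff_trunc ε).comp hu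
  have hleft : Tendsto (fun ε => ∫ x, V x * (trunc ε ∘ u) x ^ 2) (𝓝[>] 0)
      (𝓝 (∫ x, V x * u x ^ 2)) := by
    refine tendsto_integral_filter_of_dominated_convergence (fun x => ‖V x * u x ^ 2‖)
      (.of_forall fun ε => (hV.mul ((htrunc ε).continuous.pow 2)).aestronglyMeasurable)
      (.of_forall fun ε => .of_forall fun x => ?_) hVu.norm
      (.of_forall fun x => ((tendsto_trunc (hu₀ x)).pow 2).const_mul _)
    simp only [Function.comp_apply, norm_mul, norm_pow, Real.norm_of_nonneg (hu₀ x),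
      Real.norm_of_nonneg (trunc_nonneg (ε := ε) (hu₀ x))]
    gcongr
    · exact trunc_nonneg (hu₀ x)
    · exact trunc_le_self (hu₀ x)
  refine le_of_tendsto (hleft.const_mul _) ?_
  filter_upwards [self_mem_nhdsWithin] with ε hε
  have hgrad_le : ∀ x, ‖∇ (trunc ε ∘ u) x‖ ≤ ‖∇ u x‖ := fun x => by
    rw [gradient_trunc_comp (hu.differentiable one_ne_zero x), norm_smul,
      Real.norm_of_nonneg (truncSlope_nonneg _ _)]
    exact mul_le_of_le_one_left (norm_nonneg _) (truncSlope_le_one _ _)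
  calc Lam N V * ∫ x, V x * (trunc ε ∘ u) x ^ 2
      ≤ ∫ x, ‖∇ (trunc ε ∘ u) x‖ ^ 2 := Lam_mul_integral_sq_le_of_hasCompactSupport hV (htrunc ε)
        (hasCompactSupport_comp_of_tendsto_zero hlim (trunc_eventuallyEq_zero hε))
    _ ≤ ∫ x, ‖∇ u x‖ ^ 2 := integral_mono_of_nonneg (.of_forall fun x => sq_nonneg _) hgrad
        (.of_forall fun x => pow_le_pow_left₀ (norm_nonneg _) (hgrad_le x) 2)

end PrincipalEigenvalue

section Logistic

variable {N : ℕ} {V : Euc N → ℝ}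

lemma IsSolution.isDecayingSubsolution {f : ℝ → ℝ} {lam : ℝ} {u : Euc N → ℝ}
    (hu : IsSolution N V f lam u) (hf : ∀ t, 0 ≤ t → 0 ≤ f t) (hlam : 0 ≤ lam) :
    IsDecayingSubsolution (fun x => lam * V x) u where
  contDiff := hu.smooth
  nonneg x := (hu.pos x).le
  neg_laplacian_le x := by
    rw [← lap_eq_laplacian hu.smooth.contDiffAt, hu.eqn, mul_assoc]
    exact mul_le_mul_of_nonneg_left (sub_le_self _ (hf _ (hu.pos x).le)) hlam
  tendsto_zero := hu.decay

lemma CondV.continuous {V₁ V₂ : Euc N → ℝ} (hV : CondV N V V₁ V₂) : Continuous V := by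
  obtain ⟨⟨C, β, hβ, -, hC⟩, -⟩ := hV
  exact hC.continuous hβ

lemma CondVDecay.exists_isBigO (hV : CondVDecay N V) :
    ∃ α > (0 : ℝ), (fun x => max (V x) 0) =O[cocompact (Euc N)] fun x => ‖x‖ ^ (-2 - α) := by
  obtain ⟨A, α, -, hα, hA⟩ := hV
  refine ⟨α, hα, .of_bound A ?_⟩
  filter_upwards [tendsto_norm_cocompact_atTop.eventually_gt_atTop 0] with x hx
  rw [Real.norm_of_nonneg (le_max_right _ _), Real.norm_of_nonneg (by positivity)]
  exact hA x (norm_pos_iff.1 hx)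

end Logistic

theorem stmt16_general {N : ℕ} (hN : 3 ≤ N) {V : Euc N → ℝ} (hV : Continuous V) {α : ℝ}
    (hα : 0 < α)
    (hVα : (fun x => max (V x) 0) =O[cocompact (Euc N)] fun x => ‖x‖ ^ (-2 - α))
    {lam : ℝ} (hlam : 0 < lam) {u : Euc N → ℝ}
    (hu : IsDecayingSubsolution (fun x => lam * V x) u) :
    Lam N V * ∫ x, V x * u x ^ 2 ≤ ∫ x, ‖∇ u x‖ ^ 2 := by
  have hlamV : Continuous fun x => lam * V x := hV.const_mul lam
  have hmax : ∀ x, max (lam * V x) 0 = lam * max (V x) 0 := fun x => by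
    rw [mul_max_of_nonneg _ _ hlam.le, mul_zero]
  have hlamVα : (fun x => max (lam * V x) 0) =O[cocompact (Euc N)] fun x => ‖x‖ ^ (-2 - α) := by
    simpa only [hmax] using hVα.const_mul_left lam
  have hWu : Integrable fun x => max (lam * V x) 0 * u x ^ 2 :=
    hu.integrable_max_zero_mul_sq hα hlamVα hlamV (by rwa [finrank_euclideanSpace_fin])
  have hVu : Integrable fun x => V x * u x ^ 2 := by
    simpa [mul_assoc, hlam.ne'] using (hu.integrable_mul_sq hlamV hWu).const_mul lam⁻¹
  exact Lam_mul_integral_sq_le_of_tendsto_zero hV (hu.contDiff.of_le one_le_two) hu.nonneg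
    hu.tendsto_zero hVu (hu.integrable_norm_gradient_sq hlamV hWu)

/-- for any solution `u` of `(P_λ)`, `∫ |∇u|² ≥ Λ ∫ V u²`. -/
theorem stmt16 (N : ℕ) (hN : 3 ≤ N) (V V₁ V₂ : Euc N → ℝ)
    (hV : CondV N V V₁ V₂) (hdec : CondVDecay N V)
    (f : ℝ → ℝ) (hf : CondF N V f)
    (lam : ℝ) (hlam : 0 < lam)
    (u : Euc N → ℝ) (hu : IsSolution N V f lam u) :
    Lam N V * ∫ x : Euc N, V x * u x ^ 2 ≤ ∫ x : Euc N, ‖gradient u x‖ ^ 2 := by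
  obtain ⟨α, hα, hVα⟩ := hdec.exists_isBigO
  exact stmt16_general hN hV.continuous hα hVα hlam (hu.isDecayingSubsolution hf.2.1 hlam.le)

end
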